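/- (Theorem 1, third-order part, second alternative.) Assume the IMEX Runge–Kutta coefficients satisfy the third-order conditions of additive Runge–Kutta methods: Σ_{i} ω̃_i = Σ_{i} ω_i = 1; with c̃_i := Σ_{j} ã_{ij} and c_i := Σ_{j} a_{ij}, Σ_{i} w_i d_i = 1/2 for every choice w ∈ {ω̃, ω}, d ∈ {c̃, c}; Σ_{i} w_i d_i e_i = 1/3 for every choice w ∈ {ω̃, ω}, d, e ∈ {c̃, c}; and Σ_{i,j} w_i m_{ij} d_j = 1/6 for every choice w ∈ {ω̃, ω}, m ∈ {ã, a}, d ∈ {c̃, c}. Assume in addition, with γ̃_i := Σ_{j} α̃_{ij} and γ_i := Σ_{j} α_{ij}, that Σ_{i,j} ω_i a_{ij} γ_i = 1/6 and Σ_{i,j} ω_i ã_{ij} γ̃_i = 1/6, and that either Σ_{i,j} ω_i a_{ij} γ̃_i = 1/6 or Σ_{i,j} ω_i ã_{ij} γ_i = 1/6. Then the combined forward–adjoint scheme is of third order: for every exact solution (y, p̃, p) of the coupled system with p̃(0) = p(0) there exist constants C > 0 and h₀ > 0 such that for every 0 < h ≤ h₀, any one step of the combined scheme started at (y(0), p̃(0),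 p(0)) with p̃_n = p_n, whose stage values Y^(i), P̃^(i), P^(i) satisfy the stage equations and lie within distance 1 of y(0) and p(0) respectively, satisfies ‖y_{n+1} − y(h)‖ + ‖p̃_{n+1} − p̃(h)‖ + ‖p_{n+1} − p(h)‖ ≤ C h⁴. -/

import Mathlib

open Finset Matrix

/-- The Jacobian matrix of a map `g : ℝ^d → ℝ^d` at `x`:
entry `(i, j)` is `∂ g_i / ∂ x_j (x)`. -/
noncomputable def jacMat {d : ℕ} (g : (Fin d → ℝ) → (Fin d → ℝ))
    (x : Fin d → ℝ) : Matrix (Fin d) (Fin d) ℝ :=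
  fun i j => fderiv ℝ g x (Pi.single j 1) i

section aux
open Asymptotics Filter Topology

variable {E F : Type*} [NormedAddCommGroup E] [NormedSpace ℝ E]
  [NormedAddCommGroup F] [NormedSpace ℝ F]

theorem aux_bigO_of_fderiv (R : E → F) (R' : E → E →L[ℝ] F) (n : ℕ)
    (hR : ∀ v, HasFDerivAt R (R' v) v) (h0 : R 0 = 0)
    (hR' : R' =O[𝓝 0] fun v => ‖v‖ ^ n) :
    R =O[𝓝 0] fun v => ‖v‖ ^ (n + 1) := by
  obtain ⟨C, hC⟩ := hR'.bound
  obtain ⟨δ, hδ, hb⟩ := Metric.eventually_nhds_iff_ball.1 hC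
  refine IsBigO.of_bound C ?_
  filter_upwards [Metric.ball_mem_nhds (0 : E) hδ] with v hv
  have hv' : ‖v‖ < δ := by simpa using hv
  have hCn : ∀ x ∈ Metric.closedBall (0 : E) ‖v‖, ‖R' x‖ ≤ |C| * ‖v‖ ^ n := by
    intro x hx
    have hx' : ‖x‖ ≤ ‖v‖ := by simpa using hx
    have := hb x (by simpa using lt_of_le_of_lt hx' hv')
    simp only [norm_pow, norm_norm] at this
    calc ‖R' x‖ ≤ C * ‖x‖ ^ n := this
      _ ≤ |C| * ‖x‖ ^ n := by gcongr; exact le_abs_self C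
      _ ≤ |C| * ‖v‖ ^ n := by gcongr
  have key := (convex_closedBall (0 : E) ‖v‖).norm_image_sub_le_of_norm_hasFDerivWithin_le
    (fun x _ => (hR x).hasFDerivWithinAt) hCn (x := 0) (y := v) (by simp) (by simp)
  rw [h0, sub_zero, sub_zero] at key
  have hCpos : |C| * ‖v‖ ^ n * ‖v‖ = C * ‖v‖ ^ (n+1) ∨ ‖v‖ ^ n * ‖v‖ = 0 ∨ C < 0 := by
    by_cases h : C < 0
    · exact Or.inr (Or.inr h)
    · left; rw [abs_of_nonneg (not_lt.1 h)]; ring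
  have h1 := hb 0 (by simpa using hδ)
  rcases hCpos with h | h | h
  · simp only [norm_pow, norm_norm]; linarith
  · simp only [norm_pow, norm_norm]; rw [pow_succ, h, mul_zero]
    rw [mul_assoc, h, mul_zero] at key; exact key
  · -- negative constant: then the bound forces `‖v‖ ^ n = 0`
    have h2 := hb v (by simpa using hv')
    simp only [norm_pow, norm_norm] at h2
    have h3 : 0 ≤ ‖R' v‖ := norm_nonneg _
    have h4 : 0 ≤ ‖v‖ ^ n := by positivity
    have h5 : ‖v‖ ^ n = 0 := by nlinarith
    simp only [norm_pow, norm_norm]; rw [pow_succ, h5]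
    rw [h5] at key; simpa using key

theorem aux_bigO_of_deriv (u u' : ℝ → F) (n : ℕ)
    (hu : ∀ t, HasDerivAt u (u' t) t) (h0 : u 0 = 0)
    (hu' : u' =O[𝓝 0] fun t : ℝ => t ^ n) :
    u =O[𝓝 0] fun t : ℝ => t ^ (n + 1) := by
  have := aux_bigO_of_fderiv u (fun t => ContinuousLinearMap.toSpanSingleton ℝ (u' t)) n
    (fun t => (hu t).hasFDerivAt) h0 ?_
  · simpa only [← norm_pow, isBigO_norm_right] using this
  · refine IsBigO.trans (IsBigO.of_norm_eventuallyLE (.of_forall fun t => ?_))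
      (by simpa only [← norm_pow, isBigO_norm_right] using hu'.norm_left)
    simp

theorem aux_taylor (f : E → F) (hf : ContDiff ℝ (⊤ : ℕ∞) f) (z : E) :
    (fun v => f (z + v) - f z - fderiv ℝ f z v
      - (1 / 2 : ℝ) • fderiv ℝ (fderiv ℝ f) z v v) =O[𝓝 0] fun v => ‖v‖ ^ 3 := by
  have hf1 : ContDiff ℝ (⊤ : ℕ∞) (fderiv ℝ f) := hf.fderiv_right (by simp)
  have hf2 : ContDiff ℝ (⊤ : ℕ∞) (fderiv ℝ (fderiv ℝ f)) := hf1.fderiv_right (by simp)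
  have d0 : Differentiable ℝ f := hf.differentiable (by simp)
  have d1 : Differentiable ℝ (fderiv ℝ f) := hf1.differentiable (by simp)
  have d2 : Differentiable ℝ (fderiv ℝ (fderiv ℝ f)) := hf2.differentiable (by simp)
  have tr : ∀ v : E, HasFDerivAt (fun v => z + v) (ContinuousLinearMap.id ℝ E) v := fun v =>
    (hasFDerivAt_id v).const_add z
  set Q := fderiv ℝ (fderiv ℝ f) z with hQ
  have b2 : (fun v => fderiv ℝ (fderiv ℝ f) (z + v) - Q) =O[𝓝 0] fun v : E => ‖v‖ ^ 1 := by
    have h1 := DifferentiableAt.isBigO_sub (𝕜 := ℝ) (E := E) (F := E →L[ℝ] E →L[ℝ] F) (d2 z)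
    have ht : Tendsto (fun v : E => z + v) (𝓝 0) (𝓝 z) := by
      simpa using (continuous_const_add z).tendsto 0
    have h2 := h1.comp_tendsto ht
    simpa [Function.comp_def] using h2.norm_right
  have b1 : (fun v => fderiv ℝ f (z + v) - fderiv ℝ f z - Q v) =O[𝓝 0] fun v : E => ‖v‖ ^ 2 := by
    refine aux_bigO_of_fderiv _ _ 1 (fun v => ?_) (by simp) b2
    have := (((d1 (z + v)).hasFDerivAt.comp v (tr v)).sub_const (fderiv ℝ f z)).fun_sub Q.hasFDerivAt
    simpa using this
  refine aux_bigO_of_fderiv _ (fun v => fderiv ℝ f (z + v) - fderiv ℝ f z - Q v) 2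
    (fun v => ?_) (by simp) b1
  have hsym : ∀ u v, Q u v = Q v u := by
    have : IsSymmSndFDerivAt ℝ f z := hf.contDiffAt.isSymmSndFDerivAt (by simp; exact WithTop.coe_le_coe.2 (le_top (a := (2 : ℕ∞))))
    exact fun u v => this.eq u v
  have hq : HasFDerivAt (fun v => (1 / 2 : ℝ) • Q v v) (Q v) v := by
    have h1 := (Q.hasFDerivAt (x := v)).clm_apply (hasFDerivAt_id v)
    have h2 := h1.const_smul (1 / 2 : ℝ)
    refine h2.congr_fderiv ?_
    ext w
    simp [hsym w v]
    rw [← smul_add, ← two_smul ℝ, smul_smul]; norm_num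
  have := ((((d0 (z + v)).hasFDerivAt.comp v (tr v)).sub_const (f z)).fun_sub
    (fderiv ℝ f z).hasFDerivAt).fun_sub hq
  simpa using this

theorem aux_exact (f : E → E) (hf : ContDiff ℝ (⊤ : ℕ∞) f) (z : ℝ → E)
    (hz : ∀ t, HasDerivAt z (f (z t)) t) :
    (fun h : ℝ => z h - z 0 - h • f (z 0) - (h ^ 2 / 2) • fderiv ℝ f (z 0) (f (z 0))
      - (h ^ 3 / 6) • (fderiv ℝ (fderiv ℝ f) (z 0) (f (z 0)) (f (z 0))
          + fderiv ℝ f (z 0) (fderiv ℝ f (z 0) (f (z 0))))) =O[𝓝 0] fun h : ℝ => h ^ 4 := by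
  have hf1 : ContDiff ℝ (⊤ : ℕ∞) (fderiv ℝ f) := hf.fderiv_right (by simp)
  have d0 : Differentiable ℝ f := hf.differentiable (by simp)
  have d1 : Differentiable ℝ (fderiv ℝ f) := hf1.differentiable (by simp)
  have hf2 : ContDiff ℝ (⊤ : ℕ∞) (fderiv ℝ (fderiv ℝ f)) := hf1.fderiv_right (by simp)
  have dz : Differentiable ℝ z := fun t => (hz t).differentiableAt
  set G3 : E → E := fun x => fderiv ℝ (fderiv ℝ f) x (f x) (f x)
          + fderiv ℝ f x (fderiv ℝ f x (f x)) with hG3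
  have cG3 : ContDiff ℝ (⊤ : ℕ∞) G3 :=
    ((hf2.clm_apply hf).clm_apply hf).add (hf1.clm_apply (hf1.clm_apply hf))
  have dG3 : Differentiable ℝ G3 := cG3.differentiable (by simp)
  have e1 : ∀ t, HasDerivAt (fun t => f (z t)) (fderiv ℝ f (z t) (f (z t))) t := fun t =>
    (d0 (z t)).hasFDerivAt.comp_hasDerivAt t (hz t)
  have e2 : ∀ t, HasDerivAt (fun t => fderiv ℝ f (z t) (f (z t))) (G3 (z t)) t := fun t => by
    have h1 : HasDerivAt (fun t => fderiv ℝ f (z t)) (fderiv ℝ (fderiv ℝ f) (z t) (f (z t))) t :=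
      (d1 (z t)).hasFDerivAt.comp_hasDerivAt t (hz t)
    exact h1.clm_apply (e1 t)
  have b3 : (fun t => G3 (z t) - G3 (z 0)) =O[𝓝 0] fun t : ℝ => t ^ 1 := by
    have h1 := ((dG3.comp dz) 0).hasFDerivAt.isBigO_sub
    simpa using h1
  have p1 : ∀ t : ℝ, HasDerivAt (fun t : ℝ => t) 1 t := fun t => hasDerivAt_id t
  have p2 : ∀ t : ℝ, HasDerivAt (fun t : ℝ => t ^ 2 / 2) t t := fun t => by
    have := (hasDerivAt_pow 2 t).div_const 2
    simpa using this
  have p3 : ∀ t : ℝ, HasDerivAt (fun t : ℝ => t ^ 3 / 6) (t ^ 2 / 2) t := fun t => by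
    have := (hasDerivAt_pow 3 t).div_const 6
    refine this.congr_deriv ?_
    norm_num; ring
  have b2 : (fun t => fderiv ℝ f (z t) (f (z t)) - fderiv ℝ f (z 0) (f (z 0)) - t • G3 (z 0))
      =O[𝓝 0] fun t : ℝ => t ^ 2 := by
    refine aux_bigO_of_deriv _ _ 1 (fun t => ?_) (by simp) b3
    simpa using ((e2 t).sub_const (fderiv ℝ f (z 0) (f (z 0)))).fun_sub
      ((p1 t).smul_const (G3 (z 0)))
  have b1 : (fun t => f (z t) - f (z 0) - t • fderiv ℝ f (z 0) (f (z 0))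
      - (t ^ 2 / 2) • G3 (z 0)) =O[𝓝 0] fun t : ℝ => t ^ 3 := by
    refine aux_bigO_of_deriv _ _ 2 (fun t => ?_) (by simp) b2
    simpa using (((e1 t).sub_const (f (z 0))).fun_sub
      ((p1 t).smul_const (fderiv ℝ f (z 0) (f (z 0))))).fun_sub ((p2 t).smul_const (G3 (z 0)))
  refine aux_bigO_of_deriv _ _ 3 (fun t => ?_) (by simp) b1
  have :=  ((((hz t).sub_const (z 0)).fun_sub
      ((p1 t).smul_const (f (z 0)))).fun_sub
      ((p2 t).smul_const (fderiv ℝ f (z 0) (f (z 0))))).fun_sub ((p3 t).smul_const (G3 (z 0)))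
  simp only [one_smul] at this
  exact this

theorem aux_second_vanish (f : E → F) (hf : ContDiff ℝ (⊤ : ℕ∞) f) (z u v : E)
    (h : ∀ s t : ℝ, f (z + s • u + t • v) = f (z + s • u) + f (z + t • v) - f z) :
    fderiv ℝ (fderiv ℝ f) z u v = 0 := by
  have hf1 : ContDiff ℝ (⊤ : ℕ∞) (fderiv ℝ f) := hf.fderiv_right (by simp)
  have d0 : Differentiable ℝ f := hf.differentiable (by simp)
  have d1 : Differentiable ℝ (fderiv ℝ f) := hf1.differentiable (by simp)
  have line : ∀ (x v : E) (t : ℝ), HasDerivAt (fun t : ℝ => x + t • v) v t := fun x v t => by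
    simpa using ((hasDerivAt_id t).smul_const v).const_add x
  have e : ∀ s : ℝ, fderiv ℝ f (z + s • u) v = fderiv ℝ f z v := by
    intro s
    have h1 : HasDerivAt (fun t : ℝ => f (z + s • u + t • v)) (fderiv ℝ f (z + s • u) v) 0 := by
      have := (d0 (z + s • u + (0:ℝ) • v)).hasFDerivAt.comp_hasDerivAt 0 (line (z + s • u) v 0)
      simpa [Function.comp_def] using this
    have h2 : HasDerivAt (fun t : ℝ => f (z + t • v)) (fderiv ℝ f z v) 0 := by
      have := (d0 (z + (0:ℝ) • v)).hasFDerivAt.comp_hasDerivAt 0 (line z v 0)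
      simpa [Function.comp_def] using this
    have h3 := (h2.const_add (f (z + s • u))).sub_const (f z)
    have h4 : (fun t : ℝ => f (z + s • u + t • v))
        = fun t => f (z + s • u) + f (z + t • v) - f z := funext (h s)
    rw [h4] at h1
    exact h1.unique h3
  have h1 : HasDerivAt (fun s : ℝ => fderiv ℝ f (z + s • u)) (fderiv ℝ (fderiv ℝ f) z u) 0 := by
    have := (d1 (z + (0:ℝ) • u)).hasFDerivAt.comp_hasDerivAt 0 (line z u 0)
    simpa [Function.comp_def] using this
  have h2 := h1.clm_apply (hasDerivAt_const 0 v)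
  simp only [e, map_zero, add_zero] at h2
  exact (h2.unique (hasDerivAt_const 0 _))

theorem aux_sum_identities {K ι : Type*} [Fintype K] [Fintype ι]
    (b : K → ι → ℝ) (A : K → K → ι → ι → ℝ) (e : K → E) (L : K → E →L[ℝ] E)
    (Q : K → E →L[ℝ] E →L[ℝ] E) (C : K → K → ι → ℝ)
    (c1 : ∀ k, ∑ i, b k i = 1)
    (c2 : ∀ k l, ∑ i, b k i * C k l i = 1 / 2)
    (c3 : ∀ k l m, (∑ i, b k i * C k l i * C k m i - 1 / 3) • Q k (e l) (e m) = 0)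
    (c4 : ∀ k l m, (∑ i, ∑ j, b k i * A k l i j * C l m j - 1 / 6) • L k (L l (e m)) = 0)
    (U : K → ι → E) (hU : ∀ k i, U k i = ∑ l, C k l i • e l)
    (T : K → ι → E) (hT : ∀ k i, T k i = ∑ l, ∑ j, A k l i j • L l (U l j)) :
    (∑ k, ∑ i, b k i • e k = ∑ k, e k) ∧
    (∑ k, ∑ i, b k i • L k (U k i) = (1 / 2 : ℝ) • (∑ k, L k) (∑ k, e k)) ∧
    (∑ k, ∑ i, b k i • L k (T k i) = (1 / 6 : ℝ) • (∑ k, L k) ((∑ k, L k) (∑ k, e k))) ∧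
    (∑ k, ∑ i, b k i • Q k (U k i) (U k i)
      = (1 / 3 : ℝ) • (∑ k, Q k) (∑ k, e k) (∑ k, e k)) := by
  refine ⟨?_, ?_, ?_, ?_⟩
  · refine Finset.sum_congr rfl fun k _ => ?_
    rw [← Finset.sum_smul, c1, one_smul]
  · simp only [_root_.sum_apply]
    rw [Finset.smul_sum]
    refine Finset.sum_congr rfl fun k _ => ?_
    simp only [hU, map_sum, map_smul, Finset.smul_sum, smul_smul]
    rw [Finset.sum_comm]
    refine Finset.sum_congr rfl fun l _ => ?_
    rw [← Finset.sum_smul, c2]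
  · simp only [_root_.sum_apply]
    rw [Finset.smul_sum]
    refine Finset.sum_congr rfl fun k _ => ?_
    simp only [hT, hU, map_sum, map_smul, Finset.smul_sum, smul_smul]
    rw [Finset.sum_comm]
    refine Finset.sum_congr rfl fun l _ => ?_
    have : ∀ i, ∑ j, ∑ m, (b k i * (A k l i j * C l m j)) • L k (L l (e m))
        = ∑ m, ∑ j, (b k i * (A k l i j * C l m j)) • L k (L l (e m)) :=
      fun i => Finset.sum_comm
    simp only [this]
    rw [Finset.sum_comm]
    refine Finset.sum_congr rfl fun m _ => ?_
    have h4 := c4 k l m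
    rw [sub_smul, sub_eq_zero] at h4
    rw [← h4, Finset.sum_smul]
    refine Finset.sum_congr rfl fun i _ => ?_
    rw [← Finset.sum_smul]
    simp only [mul_assoc]
  · simp only [_root_.sum_apply]
    rw [Finset.smul_sum]
    refine Finset.sum_congr rfl fun k _ => ?_
    simp only [hU, map_sum, map_smul, _root_.sum_apply,
      _root_.smul_apply, Finset.smul_sum, smul_smul]
    rw [Finset.sum_comm]
    refine Finset.sum_congr rfl fun l _ => ?_
    rw [Finset.sum_comm]
    refine Finset.sum_congr rfl fun m _ => ?_
    have h3 := c3 k m l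
    rw [sub_smul, sub_eq_zero] at h3
    rw [← h3, ← Finset.sum_smul]
    congr 1
    refine Finset.sum_congr rfl fun i _ => ?_
    ring

theorem aux_gark {X : Type*} (lf : Filter X) (h : X → ℝ) (hh : Tendsto h lf (𝓝 0))
    {K ι : Type*} [Fintype K] [Fintype ι]
    (f : K → E → E) (hf : ∀ k, ContDiff ℝ (⊤ : ℕ∞) (f k)) (z : ℝ → E)
    (hz : ∀ t, HasDerivAt z (∑ k, f k (z t)) t)
    (b : K → ι → ℝ) (A : K → K → ι → ι → ℝ) (Z : X → K → ι → E)
    (hZ : ∀ᶠ x in lf, ∀ k i, Z x k i = z 0 + h x • ∑ l, ∑ j, A k l i j • f l (Z x l j))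
    (hB : ∀ k i, (fun x => f k (Z x k i)) =O[lf] fun _ => (1 : ℝ))
    (C : K → K → ι → ℝ) (hC : ∀ k l i, C k l i = ∑ j, A k l i j)
    (c1 : ∀ k, ∑ i, b k i = 1)
    (c2 : ∀ k l, ∑ i, b k i * C k l i = 1 / 2)
    (c3 : ∀ k l m, (∑ i, b k i * C k l i * C k m i - 1 / 3) •
      fderiv ℝ (fderiv ℝ (f k)) (z 0) (f l (z 0)) (f m (z 0)) = 0)
    (c4 : ∀ k l m, (∑ i, ∑ j, b k i * A k l i j * C l m j - 1 / 6) •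
      fderiv ℝ (f k) (z 0) (fderiv ℝ (f l) (z 0) (f m (z 0))) = 0) :
    (fun x => z 0 + h x • (∑ k, ∑ i, b k i • f k (Z x k i)) - z (h x))
      =O[lf] fun x => h x ^ 4 := by
  have hpow : ∀ m n : ℕ, m ≤ n → (fun x => h x ^ n) =O[lf] fun x => h x ^ m := by
    intro m n hmn
    have h1 : (fun x => h x ^ (n - m)) =O[lf] fun _ => (1 : ℝ) := by
      simpa using ((hh.pow (n - m)).isBigO_one ℝ)
    refine ((isBigO_refl (fun x => h x ^ m) lf).mul h1).congr (fun x => ?_) (fun x => ?_)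
    · rw [← pow_add]; congr 1; omega
    · simp
  set e : K → E := fun k => f k (z 0) with he
  set L : K → E →L[ℝ] E := fun k => fderiv ℝ (f k) (z 0) with hL
  set Q : K → E →L[ℝ] E →L[ℝ] E := fun k => fderiv ℝ (fderiv ℝ (f k)) (z 0) with hQ
  set U : K → ι → E := fun k i => ∑ l, C k l i • e l with hU
  set T : K → ι → E := fun k i => ∑ l, ∑ j, A k l i j • L l (U l j) with hT
  obtain ⟨i1, i2, i3, i4⟩ := aux_sum_identities b A e L Q C c1 c2 c3 c4 U (fun _ _ => rfl)
    T (fun _ _ => rfl)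
  -- generic facts
  have hsmul : ∀ (n : ℕ) (G : X → E), G =O[lf] (fun x => h x ^ n) →
      (fun x => h x • G x) =O[lf] fun x => h x ^ (n + 1) := by
    intro n G hG
    have := (isBigO_refl h lf).smul hG
    refine this.congr_right fun x => ?_
    simp [pow_succ']
  have hsum : ∀ (n : ℕ) (a : K → ι → ℝ) (G : X → K → ι → E),
      (∀ k i, (fun x => G x k i) =O[lf] (fun x => h x ^ n)) →
      (fun x => ∑ k, ∑ i, a k i • G x k i) =O[lf] (fun x => h x ^ n) := by
    intro n a G hG
    exact IsBigO.fun_sum fun k _ => IsBigO.fun_sum fun i _ => (hG k i).const_smul_left _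
  have hlin : ∀ (n : ℕ) (M : E →L[ℝ] E) (G : X → E), G =O[lf] (fun x => h x ^ n) →
      (fun x => M (G x)) =O[lf] (fun x => h x ^ n) := fun n M G hG =>
    (M.isBigO_comp G lf).trans hG
  have hbil : ∀ (m n : ℕ) (M : E →L[ℝ] E →L[ℝ] E) (G H : X → E),
      G =O[lf] (fun x => h x ^ m) → H =O[lf] (fun x => h x ^ n) →
      (fun x => M (G x) (H x)) =O[lf] (fun x => h x ^ (m + n)) := by
    intro m n M G H hG hH
    have h1 : (fun x => M (G x) (H x)) =O[lf] (fun x => ‖G x‖ * ‖H x‖) := by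
      refine IsBigO.of_bound ‖M‖ (.of_forall fun x => ?_)
      have := M.le_opNorm₂ (G x) (H x)
      simpa [mul_assoc] using this
    refine (h1.trans (hG.norm_left.mul hH.norm_left)).congr_right fun x => ?_
    rw [pow_add]
  -- step 1
  have s1 : ∀ k i, (fun x => Z x k i - z 0) =O[lf] fun x => h x ^ 1 := by
    intro k i
    have h1 := hsmul 0 _ (hsum 0 (fun l j => A k l i j) (fun x l j => f l (Z x l j))
      (fun l j => by simpa using hB l j))
    refine h1.congr' ?_ EventuallyEq.rfl
    filter_upwards [hZ] with x hx
    rw [hx k i]; abel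
  have s2 : ∀ k i, Tendsto (fun x => Z x k i - z 0) lf (𝓝 0) := fun k i =>
    (s1 k i).trans_tendsto (by simpa using hh)
  have t3 : ∀ k i, (fun x => f k (Z x k i) - e k - L k (Z x k i - z 0)
      - (1 / 2 : ℝ) • Q k (Z x k i - z 0) (Z x k i - z 0)) =O[lf] fun x => h x ^ 3 := by
    intro k i
    have h1 := (aux_taylor (f k) (hf k) (z 0)).comp_tendsto (s2 k i)
    have h2 : ((fun v : E => ‖v‖ ^ 3) ∘ fun x => Z x k i - z 0) =O[lf] fun x => h x ^ 3 := by
      have := ((s1 k i).norm_left).pow 3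
      simpa [Function.comp_def] using this
    simpa [Function.comp_def] using h1.trans h2
  have q2 : ∀ k i, (fun x => (1 / 2 : ℝ) • Q k (Z x k i - z 0) (Z x k i - z 0))
      =O[lf] fun x => h x ^ 2 := fun k i =>
    (hbil 1 1 (Q k) _ _ (s1 k i) (s1 k i)).const_smul_left (1 / 2 : ℝ)
  have a1 : ∀ k i, (fun x => f k (Z x k i) - e k) =O[lf] fun x => h x ^ 1 := by
    intro k i
    have := (((t3 k i).trans (hpow 1 3 (by norm_num))).add
      ((q2 k i).trans (hpow 1 2 (by norm_num)))).add (hlin 1 (L k) _ (s1 k i))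
    refine this.congr_left fun x => ?_
    abel
  have s3 : ∀ k i, (fun x => Z x k i - z 0 - h x • U k i) =O[lf] fun x => h x ^ 2 := by
    intro k i
    have h1 := hsmul 1 _ (hsum 1 (fun l j => A k l i j) (fun x l j => f l (Z x l j) - e l) a1)
    refine h1.congr' ?_ EventuallyEq.rfl
    filter_upwards [hZ] with x hx
    rw [hx k i]
    simp only [hU, hC, smul_sub, Finset.sum_sub_distrib, Finset.sum_smul]
    abel
  have a2 : ∀ k i, (fun x => f k (Z x k i) - e k - h x • L k (U k i))
      =O[lf] fun x => h x ^ 2 := by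
    intro k i
    have := (((t3 k i).trans (hpow 2 3 (by norm_num))).add (q2 k i)).add
      (hlin 2 (L k) _ (s3 k i))
    refine this.congr_left fun x => ?_
    simp only [map_sub, map_smul]
    abel
  have s4 : ∀ k i, (fun x => Z x k i - z 0 - h x • U k i - h x ^ 2 • T k i)
      =O[lf] fun x => h x ^ 3 := by
    intro k i
    have h1 := hsmul 2 _ (hsum 2 (fun l j => A k l i j)
      (fun x l j => f l (Z x l j) - e l - h x • L l (U l j)) a2)
    refine h1.congr' ?_ EventuallyEq.rfl
    filter_upwards [hZ] with x hx
    rw [hx k i]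
    have hTx : h x ^ 2 • T k i = h x • ∑ l, ∑ j, A k l i j • h x • L l (U l j) := by
      simp only [hT, Finset.smul_sum, smul_smul]
      refine Finset.sum_congr rfl fun l _ => Finset.sum_congr rfl fun j _ => ?_
      congr 1; ring
    have hUx : h x • U k i = h x • ∑ l, ∑ j, A k l i j • e l := by
      simp only [hU, hC, Finset.sum_smul]
    rw [hTx, hUx]
    simp only [smul_sub, Finset.sum_sub_distrib]
    abel
  have hUO : ∀ k i, (fun x => h x • U k i) =O[lf] fun x => h x ^ 1 := by
    intro k i
    refine hsmul 0 (fun _ => U k i) ?_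
    simpa using isBigO_const_const (U k i) (one_ne_zero (α := ℝ)) lf
  have a3 : ∀ k i, (fun x => f k (Z x k i) - e k - h x • L k (U k i) - h x ^ 2 • L k (T k i)
      - (h x ^ 2 / 2) • Q k (U k i) (U k i)) =O[lf] fun x => h x ^ 3 := by
    intro k i
    have r1 := (hbil 2 1 (Q k) _ _ (s3 k i) (s1 k i)).const_smul_left (1 / 2 : ℝ)
    have r2 := (hbil 1 2 (Q k) _ _ (hUO k i) (s3 k i)).const_smul_left (1 / 2 : ℝ)
    have := (((t3 k i).add (hlin 3 (L k) _ (s4 k i))).add r1).add r2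
    refine this.congr_left fun x => ?_
    have hx2 : (h x ^ 2 / 2) • Q k (U k i) (U k i)
        = (1 / 2 : ℝ) • Q k (h x • U k i) (h x • U k i) := by
      simp only [map_smul, _root_.smul_apply, smul_smul]
      congr 1; ring
    rw [hx2]
    have hx3 : L k (Z x k i - z 0 - h x • U k i - h x ^ 2 • T k i)
        = L k (Z x k i - z 0) - h x • L k (U k i) - h x ^ 2 • L k (T k i) := by
      simp only [map_sub, map_smul]
    rw [hx3]
    simp only [Pi.smul_apply]
    generalize h x • U k i = W
    generalize Z x k i - z 0 = V
    simp only [map_sub, _root_.sub_apply]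
    module
  have a4 := hsmul 3 _ (hsum 3 b _ a3)
  have hF : ContDiff ℝ (⊤ : ℕ∞) (fun x => ∑ k, f k x) := ContDiff.sum fun k _ => hf k
  have hF1 : fderiv ℝ (fun x => ∑ k, f k x) = fun x => ∑ k, fderiv ℝ (f k) x := by
    funext x
    exact fderiv_fun_sum fun k _ => ((hf k).differentiable (by simp)) x
  have hF2 : fderiv ℝ (fderiv ℝ (fun x => ∑ k, f k x)) (z 0) = ∑ k, Q k := by
    rw [hF1]
    exact fderiv_fun_sum fun k _ =>
      (((hf k).fderiv_right (m := (⊤ : ℕ∞)) (by simp)).differentiable (by simp)) (z 0)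
  have ex := (aux_exact _ hF z hz).comp_tendsto hh
  rw [hF2, hF1] at ex
  refine (a4.sub ex).congr_left fun x => ?_
  simp only [Function.comp_apply]
  change _ - (z (h x) - z 0 - h x • (∑ k, e k) - (h x ^ 2 / 2) • (∑ k, L k) (∑ k, e k)
    - (h x ^ 3 / 6) • ((∑ k, Q k) (∑ k, e k) (∑ k, e k)
      + (∑ k, L k) ((∑ k, L k) (∑ k, e k)))) = _
  have j2 : ∑ k, ∑ i, b k i • h x • L k (U k i)
      = h x • ((1 / 2 : ℝ) • (∑ k, L k) (∑ k, e k)) := by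
    rw [← i2]; simp only [Finset.smul_sum, smul_comm (h x)]
  have j3 : ∑ k, ∑ i, b k i • h x ^ 2 • L k (T k i)
      = h x ^ 2 • ((1 / 6 : ℝ) • (∑ k, L k) ((∑ k, L k) (∑ k, e k))) := by
    rw [← i3]; simp only [Finset.smul_sum, smul_comm (h x ^ 2)]
  have j4 : ∑ k, ∑ i, b k i • (h x ^ 2 / 2) • Q k (U k i) (U k i)
      = (h x ^ 2 / 2) • ((1 / 3 : ℝ) • (∑ k, Q k) (∑ k, e k) (∑ k, e k)) := by
    rw [← i4]; simp only [Finset.smul_sum, smul_comm (h x ^ 2 / 2)]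
  simp only [smul_sub, Finset.sum_sub_distrib]
  rw [i1, j2, j3, j4]
  module

theorem aux_first_vanish (f : E → F) (hf : ContDiff ℝ (⊤ : ℕ∞) f) (z v : E)
    (h : ∀ t : ℝ, f (z + t • v) = f z) : fderiv ℝ f z v = 0 := by
  have d0 : Differentiable ℝ f := hf.differentiable (by simp)
  have line : HasDerivAt (fun t : ℝ => z + t • v) v 0 := by
    simpa using ((hasDerivAt_id (0 : ℝ)).smul_const v).const_add z
  have h2 : HasDerivAt (fun t : ℝ => f (z + t • v)) (fderiv ℝ f z v) 0 := by
    have := (d0 (z + (0:ℝ) • v)).hasFDerivAt.comp_hasDerivAt 0 line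
    simpa [Function.comp_def] using this
  simp only [h] at h2
  exact h2.unique (hasDerivAt_const 0 _)

/-- The four right-hand side pieces: forward (`false`) and adjoint (`true`). -/
def auxF (G : Bool → E → E) (B : Bool → E → E → E) : Bool × Bool → E × E → E × E
  | (false, t), z => (G t z.1, 0)
  | (true, t), z => (0, - B t z.1 z.2)

/-- The coefficient tableaux of the combined scheme. -/
noncomputable def auxA {ι : Type*} (W : Bool → ι → ℝ) (M : Bool → ι → ι → ℝ) :
    Bool × Bool → Bool × Bool → ι → ι → ℝ
  | _, (false, t'), i, j => M t' i j
  | (_, t), (true, t'), i, j => W t' j - (W t' j / W t i) * M t j i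

theorem aux_conditions {ι : Type*} [Fintype ι] (W : Bool → ι → ℝ) (M : Bool → ι → ι → ℝ)
    (hW : ∀ t i, W t i ≠ 0) (c : Bool → ι → ℝ) (hc : ∀ t i, c t i = ∑ j, M t i j)
    (S1 : ∀ t, ∑ i, W t i = 1) (S2 : ∀ t t', ∑ i, W t i * c t' i = 1 / 2)
    (S3 : ∀ t t' t'', ∑ i, W t i * c t' i * c t'' i = 1 / 3)
    (S4 : ∀ t t' t'', ∑ i, ∑ j, W t i * M t' i j * c t'' j = 1 / 6)
    (C : Bool × Bool → Bool × Bool → ι → ℝ) (hC : ∀ k l i, C k l i = ∑ j, auxA W M k l i j) :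
    (∀ k l, ∑ i, W k.2 i * C k l i = 1 / 2) ∧
    (∀ k l m, (l.1 = false ∨ m.1 = false) → ∑ i, W k.2 i * C k l i * C k m i = 1 / 3) ∧
    (∀ k l m, (l.1 = true ∨ m.1 = false) →
      ∑ i, ∑ j, W k.2 i * auxA W M k l i j * C l m j = 1 / 6) := by
  have C0 : ∀ k t i, C k (false, t) i = c t i := fun k t i => by rw [hC, hc]; rfl
  have C1 : ∀ k t i, W k.2 i * C k (true, t) i = W k.2 i - ∑ j, W t j * M k.2 j i := by
    intro k t i
    rw [hC, Finset.mul_sum]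
    have : ∀ j, W k.2 i * auxA W M k (true, t) i j = W k.2 i * W t j - W t j * M k.2 j i := by
      intro j
      have := hW k.2 i
      simp only [auxA]
      field_simp
    simp only [this, Finset.sum_sub_distrib]
    rw [← Finset.mul_sum, S1, mul_one]
  have H2 : ∀ k l, ∑ i, W k.2 i * C k l i = 1 / 2 := by
    rintro k ⟨_ | _, t⟩
    · simp only [C0, S2]
    · simp only [C1, Finset.sum_sub_distrib]
      rw [S1, Finset.sum_comm]
      simp only [← Finset.mul_sum, ← hc, S2]
      norm_num
  have H3' : ∀ k t t', ∑ i, W k.2 i * C k (true, t) i * c t' i = 1 / 3 := by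
    intro k t t'
    simp only [C1, sub_mul, Finset.sum_sub_distrib, S2]
    simp only [Finset.sum_mul]
    rw [Finset.sum_comm, S4]
    norm_num
  have H3 : ∀ k l m, (l.1 = false ∨ m.1 = false) →
      ∑ i, W k.2 i * C k l i * C k m i = 1 / 3 := by
    rintro k ⟨_ | _, t⟩ ⟨_ | _, t'⟩ h
    · simp only [C0, S3]
    · rw [← H3' k t' t]
      refine Finset.sum_congr rfl fun i _ => ?_
      rw [C0]; ring
    · simp only [C0, H3']
    · simp at h
  refine ⟨H2, H3, ?_⟩
  rintro k ⟨_ | _, t⟩ m h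
  · obtain ⟨_ | _, t'⟩ := m
    · simp only [C0]
      exact S4 k.2 t t'
    · simp at h
  · have : ∀ i j, W k.2 i * auxA W M k (true, t) i j * C (true, t) m j
        = W k.2 i * (W t j * C (true, t) m j) - W t j * M k.2 j i * C (true, t) m j := by
      intro i j
      have := hW k.2 i
      simp only [auxA]
      field_simp
    simp only [this, Finset.sum_sub_distrib, ← Finset.mul_sum, ← Finset.sum_mul]
    rw [S1, H2 (true, t) m, Finset.sum_comm]
    have e : ∑ j, ∑ i, W t j * M k.2 j i * C (true, t) m j = 1 / 3 := by
      rw [← H3 (true, t) m (false, k.2) (Or.inr rfl)]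
      refine Finset.sum_congr rfl fun j _ => ?_
      rw [C0, hc, ← Finset.sum_mul, ← Finset.mul_sum]; ring
    rw [e]; norm_num

theorem aux_main [ProperSpace E] {ι : Type*} [Fintype ι]
    (W : Bool → ι → ℝ) (M : Bool → ι → ι → ℝ)
    (hW : ∀ t i, W t i ≠ 0) (c : Bool → ι → ℝ) (hc : ∀ t i, c t i = ∑ j, M t i j)
    (S1 : ∀ t, ∑ i, W t i = 1) (S2 : ∀ t t', ∑ i, W t i * c t' i = 1 / 2)
    (S3 : ∀ t t' t'', ∑ i, W t i * c t' i * c t'' i = 1 / 3)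
    (S4 : ∀ t t' t'', ∑ i, ∑ j, W t i * M t' i j * c t'' j = 1 / 6)
    (G : Bool → E → E) (B : Bool → E → E → E)
    (hG : ∀ t, ContDiff ℝ (⊤ : ℕ∞) (G t))
    (hB : ∀ t, ContDiff ℝ (⊤ : ℕ∞) (fun z : E × E => B t z.1 z.2))
    (hBadd : ∀ t y p q, B t y (p + q) = B t y p + B t y q)
    (y p : ℝ → E)
    (hy : ∀ t, HasDerivAt y (∑ k, G k (y t)) t)
    (hp : ∀ t, HasDerivAt p (- ∑ k, B k (y t) (p t)) t) :
    ∃ C > (0:ℝ), ∃ h₀ > (0:ℝ), ∀ h : ℝ, 0 < h → h ≤ h₀ →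
      ∀ (Y : ι → E) (P : Bool → ι → E),
      (∀ i, Y i = y 0 + h • ∑ t, ∑ j, M t i j • G t (Y j)) →
      (∀ t i, P t i = p 0
        - h • ∑ t', ∑ j, (W t' j - (W t' j / W t i) * M t j i) • B t' (Y j) (P t' j)) →
      (∀ i, ‖Y i - y 0‖ ≤ 1) → (∀ t i, ‖P t i - p 0‖ ≤ 1) →
      ‖y 0 + h • ∑ t, ∑ i, W t i • G t (Y i) - y h‖ ≤ C * h ^ 4 ∧
      ‖p 0 - h • ∑ t, ∑ i, W t i • B t (Y i) (P t i) - p h‖ ≤ C * h ^ 4 := by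
  set X := ℝ × (ι → E) × (Bool → ι → E) with hX
  set S : Set X := {x | (∀ i, x.2.1 i = y 0 + x.1 • ∑ t, ∑ j, M t i j • G t (x.2.1 j)) ∧
      (∀ t i, x.2.2 t i = p 0 - x.1 • ∑ t', ∑ j,
        (W t' j - (W t' j / W t i) * M t j i) • B t' (x.2.1 j) (x.2.2 t' j)) ∧
      (∀ i, ‖x.2.1 i - y 0‖ ≤ 1) ∧ (∀ t i, ‖x.2.2 t i - p 0‖ ≤ 1)} with hS
  set lf : Filter X := comap Prod.fst (𝓝 0) ⊓ 𝓟 S with hlf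
  have hSl : ∀ᶠ x in lf, x ∈ S := mem_inf_of_right (mem_principal_self S)
  have hh : Tendsto (Prod.fst : X → ℝ) lf (𝓝 0) := tendsto_comap.mono_left inf_le_left
  have hf : ∀ k, ContDiff ℝ (⊤ : ℕ∞) (auxF G B k) := by
    rintro ⟨_ | _, t⟩
    · exact ((hG t).comp contDiff_fst).prodMk contDiff_const
    · exact contDiff_const.prodMk (hB t).neg
  set z : ℝ → E × E := fun t => (y t, p t) with hzdef
  have hzd : ∀ t, HasDerivAt z (∑ k, auxF G B k (z t)) t := by
    intro t
    refine ((hy t).prodMk (hp t)).congr_deriv ?_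
    rw [Fintype.sum_prod_type]
    simp [auxF, hzdef, add_comm]
  set Z : X → Bool × Bool → ι → E × E := fun x k i => (x.2.1 i, x.2.2 k.2 i) with hZdef
  have hZ : ∀ᶠ x in lf, ∀ k i, Z x k i
      = z 0 + x.1 • ∑ l, ∑ j, auxA W M k l i j • auxF G B l (Z x l j) := by
    filter_upwards [hSl] with x hx k i
    obtain ⟨h1, h2, -, -⟩ := hx
    rw [Fintype.sum_prod_type]
    refine Prod.ext ?_ ?_
    · simpa [auxF, auxA, hzdef, hZdef, Prod.fst_sum] using h1 i
    · have := h2 k.2 i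
      simp [auxF, auxA, hzdef, hZdef, Prod.snd_sum] at this ⊢
      rw [this]
      module
  have hBd : ∀ k i, (fun x => auxF G B k (Z x k i)) =O[lf] fun _ => (1 : ℝ) := by
    intro k i
    obtain ⟨K, hK⟩ := (isCompact_closedBall (z 0) 1).exists_bound_of_continuousOn
      (hf k).continuous.continuousOn
    refine IsBigO.of_bound K ?_
    filter_upwards [hSl] with x hx
    obtain ⟨-, -, h3, h4⟩ := hx
    have : Z x k i ∈ Metric.closedBall (z 0) 1 := by
      rw [mem_closedBall_iff_norm, Prod.norm_def]
      exact max_le (h3 i) (h4 k.2 i)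
    simpa using hK _ this
  obtain ⟨H2, H3, H4⟩ := aux_conditions W M hW c hc S1 S2 S3 S4
    (fun k l i => ∑ j, auxA W M k l i j) (fun _ _ _ => rfl)
  have adjdir : ∀ m : Bool × Bool, m.1 = true → ∃ q, auxF G B m (z 0) = (0, q) := by
    rintro ⟨_ | _, t⟩ h
    · simp at h
    · exact ⟨_, rfl⟩
  have main := aux_gark lf Prod.fst hh (auxF G B) hf z hzd (fun k => W k.2) (auxA W M) Z hZ hBd
    (fun k l i => ∑ j, auxA W M k l i j) (fun _ _ _ => rfl) (fun k => S1 k.2) H2 ?_ ?_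
  · obtain ⟨C, hCpos, hC⟩ := main.exists_pos
    have hC := hC.bound
    rw [hlf, eventually_inf_principal, eventually_comap, Metric.eventually_nhds_iff_ball] at hC
    obtain ⟨δ, hδ, hCδ⟩ := hC
    refine ⟨C, hCpos, δ / 2, by positivity, fun h h0 hle Y P h1 h2 h3 h4 => ?_⟩
    have key := hCδ h (by simp [abs_of_pos h0]; linarith) (h, Y, P) rfl ⟨h1, h2, h3, h4⟩
    rw [Real.norm_of_nonneg (by positivity)] at key
    rw [Prod.norm_def, max_le_iff, Fintype.sum_prod_type] at key
    refine ⟨le_trans (le_of_eq ?_) key.1, le_trans (le_of_eq ?_) key.2⟩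
    · simp [auxF, hzdef, hZdef, Prod.fst_sum]
    · simp [auxF, hzdef, hZdef, Prod.snd_sum]
      congr 1
      module
  · intro k l m
    by_cases hlm : l.1 = false ∨ m.1 = false
    · rw [H3 k l m hlm, sub_self, zero_smul]
    · simp only [not_or, Bool.not_eq_false] at hlm
      obtain ⟨u, hu⟩ := adjdir l hlm.1
      obtain ⟨v, hv⟩ := adjdir m hlm.2
      rw [hu, hv, aux_second_vanish _ (hf k), smul_zero]
      intro s t
      obtain ⟨_ | _, k'⟩ := k
      · simp [auxF]
      · have := hBadd k' (y 0) (p 0 + s • u) (t • v)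
        have h2 := hBadd k' (y 0) (p 0) (t • v)
        simp [auxF, hzdef, this, h2]
        abel
  · intro k l m
    by_cases hlm : l.1 = true ∨ m.1 = false
    · rw [H4 k l m hlm, sub_self, zero_smul]
    · simp only [not_or, Bool.not_eq_false, Bool.not_eq_true] at hlm
      obtain ⟨v, hv⟩ := adjdir m hlm.2
      rw [hv, aux_first_vanish _ (hf l), map_zero, smul_zero]
      intro t
      obtain ⟨_ | _, l'⟩ := l
      · simp [auxF]
      · simp at hlm

end aux

theorem aux_jac_smooth {d : ℕ} (g : (Fin d → ℝ) → (Fin d → ℝ)) (hg : ContDiff ℝ (⊤ : ℕ∞) g)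
    (i j : Fin d) : ContDiff ℝ (⊤ : ℕ∞) (fun x => jacMat g x i j) := by
  have h1 : ContDiff ℝ (⊤ : ℕ∞) (fderiv ℝ g) := hg.fderiv_right (by simp)
  have h2 : ContDiff ℝ (⊤ : ℕ∞) (fun x => fderiv ℝ g x (Pi.single j 1)) :=
    h1.clm_apply contDiff_const
  exact (contDiff_pi.1 h2) i

theorem aux_mulVec_smooth {d : ℕ} {V : Type*} [NormedAddCommGroup V] [NormedSpace ℝ V]
    (A : V → Matrix (Fin d) (Fin d) ℝ) (q : V → Fin d → ℝ)
    (hA : ∀ i j, ContDiff ℝ (⊤ : ℕ∞) (fun x => A x i j)) (hq : ContDiff ℝ (⊤ : ℕ∞) q) :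
    ContDiff ℝ (⊤ : ℕ∞) (fun x => A x *ᵥ q x) := by
  rw [contDiff_pi]
  intro i
  simp only [Matrix.mulVec, dotProduct]
  exact ContDiff.sum fun j _ => (hA i j).mul ((contDiff_pi.1 hq) j)

/-- Theorem 1, third-order part (second alternative): if the IMEX Runge–Kutta
method satisfies the third-order conditions of additive Runge–Kutta methods
together with the extra conditions `Σ_{i,j} ω_i a_{ij} γ_i = Σ_{i,j} ω_i ã_{ij} γ̃_i = 1/6` and one of
`Σ_{i,j} ω_i a_{ij} γ̃_i = 1/6` or `Σ_{i,j} ω_i ã_{ij} γ_i = 1/6`,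
then one step of the combined forward–adjoint scheme has a local error of
order `h⁴`. -/
theorem imex_adjoint_third_order_alt2 (s d : ℕ) (hs : 1 ≤ s) (hd : 1 ≤ d)
    (ta a : Fin s → Fin s → ℝ) (tw w : Fin s → ℝ)
    (hta : ∀ i j : Fin s, i ≤ j → ta i j = 0)
    (ha : ∀ i j : Fin s, i < j → a i j = 0)
    (htw0 : ∀ i, tw i ≠ 0) (hw0 : ∀ i, w i ≠ 0)
    (tα α tβ β : Fin s → Fin s → ℝ)
    (htα : ∀ i j, tα i j = tw j - (tw j / tw i) * ta j i)
    (hα : ∀ i j, α i j = w j - (w j / tw i) * ta j i)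
    (htβ : ∀ i j, tβ i j = tw j - (tw j / w i) * a j i)
    (hβ : ∀ i j, β i j = w j - (w j / w i) * a j i)
    (ε : ℝ) (hε : 0 < ε)
    (D Dbar : Matrix (Fin d) (Fin d) ℝ)
    (g r : (Fin d → ℝ) → (Fin d → ℝ))
    (hg : ContDiff ℝ (⊤ : ℕ∞) g) (hr : ContDiff ℝ (⊤ : ℕ∞) r)
    (hgb : ∀ n : ℕ, ∃ C, ∀ x, ‖iteratedFDeriv ℝ n g x‖ ≤ C)
    (hrb : ∀ n : ℕ, ∃ C, ∀ x, ‖iteratedFDeriv ℝ n r x‖ ≤ C)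
    -- third-order conditions of additive Runge–Kutta methods
    (hord1 : ∑ i, tw i = 1) (hord1' : ∑ i, w i = 1)
    (ct c : Fin s → ℝ)
    (hct : ∀ i, ct i = ∑ j, ta i j) (hc : ∀ i, c i = ∑ j, a i j)
    (hord2 : ∀ w' ∈ ({tw, w} : Set (Fin s → ℝ)), ∀ d' ∈ ({ct, c} : Set (Fin s → ℝ)),
      ∑ i, w' i * d' i = 1 / 2)
    (hord3a : ∀ w' ∈ ({tw, w} : Set (Fin s → ℝ)), ∀ d' ∈ ({ct, c} : Set (Fin s → ℝ)),
      ∀ e' ∈ ({ct, c} : Set (Fin s → ℝ)), ∑ i, w' i * d' i * e' i = 1 / 3)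
    (hord3b : ∀ w' ∈ ({tw, w} : Set (Fin s → ℝ)),
      ∀ m ∈ ({ta, a} : Set (Fin s → Fin s → ℝ)), ∀ d' ∈ ({ct, c} : Set (Fin s → ℝ)),
      ∑ i, ∑ j, w' i * m i j * d' j = 1 / 6)
    -- row sums of the adjoint coefficients
    (gt ga : Fin s → ℝ)
    (hgt : ∀ i, gt i = ∑ j, tα i j) (hga : ∀ i, ga i = ∑ j, α i j)
    (hextra1 : ∑ i, ∑ j, w i * a i j * ga i = 1 / 6)
    (hextra2 : ∑ i, ∑ j, w i * ta i j * gt i = 1 / 6)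
    (hextra3 : (∑ i, ∑ j, w i * a i j * gt i = 1 / 6) ∨
               (∑ i, ∑ j, w i * ta i j * ga i = 1 / 6))
    -- exact solution of the coupled forward–adjoint system
    (y pt p : ℝ → Fin d → ℝ)
    (hy : ∀ t, HasDerivAt y (D *ᵥ g (y t) + ε⁻¹ • r (y t)) t)
    (hpt : ∀ t, HasDerivAt pt
      (-(((jacMat g (y t))ᵀ * Dbar) *ᵥ pt t)
        - ε⁻¹ • ((jacMat r (y t))ᵀ *ᵥ p t)) t)
    (hp : ∀ t, HasDerivAt p
      (-(((jacMat g (y t))ᵀ * Dbar) *ᵥ pt t)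
        - ε⁻¹ • ((jacMat r (y t))ᵀ *ᵥ p t)) t)
    (h0eq : pt 0 = p 0) :
    ∃ C > (0:ℝ), ∃ h₀ > (0:ℝ), ∀ h : ℝ, 0 < h → h ≤ h₀ →
      ∀ Y tP P : Fin s → Fin d → ℝ,
      (∀ i, Y i = y 0
          + h • ∑ j ∈ univ.filter (fun j => j < i), ta i j • (D *ᵥ g (Y j))
          + h • ∑ j ∈ univ.filter (fun j => j ≤ i), a i j • (ε⁻¹ • r (Y j))) →
      (∀ i, tP i = p 0
          - h • ∑ j, tα i j • (((jacMat g (Y j))ᵀ * Dbar) *ᵥ tP j)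
          - h • ∑ j, α i j • (ε⁻¹ • ((jacMat r (Y j))ᵀ *ᵥ P j))) →
      (∀ i, P i = p 0
          - h • ∑ j, tβ i j • (((jacMat g (Y j))ᵀ * Dbar) *ᵥ tP j)
          - h • ∑ j, β i j • (ε⁻¹ • ((jacMat r (Y j))ᵀ *ᵥ P j))) →
      (∀ i, ‖Y i - y 0‖ ≤ 1 ∧ ‖tP i - p 0‖ ≤ 1 ∧ ‖P i - p 0‖ ≤ 1) →
      ‖(y 0 + h • ∑ i, tw i • (D *ᵥ g (Y i))
            + h • ∑ i, w i • (ε⁻¹ • r (Y i))) - y h‖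
      + ‖(pt 0 - h • ∑ i, tw i • (((jacMat g (Y i))ᵀ * Dbar) *ᵥ tP i)
               - h • ∑ i, w i • (ε⁻¹ • ((jacMat r (Y i))ᵀ *ᵥ P i))) - pt h‖
      + ‖(p 0 - h • ∑ i, tw i • (((jacMat g (Y i))ᵀ * Dbar) *ᵥ tP i)
              - h • ∑ i, w i • (ε⁻¹ • ((jacMat r (Y i))ᵀ *ᵥ P i))) - p h‖
      ≤ C * h ^ 4 := by
  have hpp : pt = p := by
    have hd : ∀ t, HasDerivAt (fun t => pt t - p t) 0 t := fun t => by
      simpa using (hpt t).fun_sub (hp t)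
    have hconst := is_const_of_deriv_eq_zero (fun t => (hd t).differentiableAt)
      (fun t => (hd t).deriv)
    funext t
    have := hconst t 0
    simp only [h0eq, sub_self] at this
    exact sub_eq_zero.1 this
  subst hpp
  set W : Bool → Fin s → ℝ := fun t => cond t tw w with hWdef
  set M : Bool → Fin s → Fin s → ℝ := fun t => cond t ta a with hMdef
  set cc : Bool → Fin s → ℝ := fun t => cond t ct c with hcdef
  set G : Bool → (Fin d → ℝ) → Fin d → ℝ := fun t x =>
    cond t (D *ᵥ g x) (ε⁻¹ • r x) with hGdef
  set B : Bool → (Fin d → ℝ) → (Fin d → ℝ) → Fin d → ℝ := fun t x q =>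
    cond t (((jacMat g x)ᵀ * Dbar) *ᵥ q) (ε⁻¹ • ((jacMat r x)ᵀ *ᵥ q)) with hBdef
  have mW : ∀ t, W t ∈ ({tw, w} : Set (Fin s → ℝ)) := by rintro (_ | _) <;> simp [hWdef]
  have mM : ∀ t, M t ∈ ({ta, a} : Set (Fin s → Fin s → ℝ)) := by
    rintro (_ | _) <;> simp [hMdef]
  have mc : ∀ t, cc t ∈ ({ct, c} : Set (Fin s → ℝ)) := by rintro (_ | _) <;> simp [hcdef]
  obtain ⟨C, hC, h₀, hh₀, H⟩ := aux_main W M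
    (by rintro (_ | _) i; exacts [hw0 i, htw0 i]) cc
    (by rintro (_ | _) i; exacts [hc i, hct i])
    (by rintro (_ | _); exacts [hord1', hord1])
    (fun t t' => hord2 _ (mW t) _ (mc t'))
    (fun t t' t'' => hord3a _ (mW t) _ (mc t') _ (mc t''))
    (fun t t' t'' => hord3b _ (mW t) _ (mM t') _ (mc t''))
    G B
    (by
      rintro (_ | _)
      · exact ContDiff.const_smul ε⁻¹ hr
      · exact aux_mulVec_smooth (fun _ => D) g (fun _ _ => contDiff_const) hg)
    (by
      rintro (_ | _)
      · exact ContDiff.const_smul ε⁻¹ (aux_mulVec_smooth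
          (fun z : (Fin d → ℝ) × (Fin d → ℝ) => (jacMat r z.1)ᵀ) _
          (fun i j => (aux_jac_smooth r hr j i).comp contDiff_fst) contDiff_snd)
      · refine aux_mulVec_smooth (fun z : (Fin d → ℝ) × (Fin d → ℝ) =>
          (jacMat g z.1)ᵀ * Dbar) _ (fun i j => ?_) contDiff_snd
        simp only [Matrix.mul_apply, Matrix.transpose_apply]
        exact ContDiff.sum fun k _ =>
          ((aux_jac_smooth g hg k i).comp contDiff_fst).mul contDiff_const)
    (by
      rintro (_ | _) x q q'
      · simp [hBdef, Matrix.mulVec_add]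
      · simp [hBdef, Matrix.mulVec_add])
    y pt
    (fun t => (hy t).congr_deriv (by simp [hGdef]))
    (fun t => (hp t).congr_deriv (by simp [hBdef]; abel))
  refine ⟨3 * C, by positivity, h₀, hh₀, fun h hpos hle Y tP P hY htP hP hbd => ?_⟩
  obtain ⟨e1, e2⟩ := H h hpos hle Y (fun t => cond t tP P)
    (by
      intro i
      rw [hY i]
      have f1 : ∑ j ∈ univ.filter (fun j => j < i), ta i j • (D *ᵥ g (Y j))
          = ∑ j, ta i j • (D *ᵥ g (Y j)) := by
        refine Finset.sum_subset (Finset.subset_univ _) fun j _ hj => ?_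
        rw [hta i j (by simpa using hj), zero_smul]
      have f2 : ∑ j ∈ univ.filter (fun j => j ≤ i), a i j • (ε⁻¹ • r (Y j))
          = ∑ j, a i j • (ε⁻¹ • r (Y j)) := by
        refine Finset.sum_subset (Finset.subset_univ _) fun j _ hj => ?_
        rw [ha i j (by simpa using hj), zero_smul]
      rw [f1, f2, Fintype.sum_bool, smul_add, ← add_assoc]
      rfl)
    (by
      rintro (_ | _) i
      · simp only [cond_false]
        rw [hP i, Fintype.sum_bool, smul_add, ← sub_sub]
        simp only [htβ, hβ]
        rfl
      · simp only [cond_true]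
        rw [htP i, Fintype.sum_bool, smul_add, ← sub_sub]
        simp only [htα, hα]
        rfl)
    (fun i => (hbd i).1)
    (by rintro (_ | _) i; exacts [(hbd i).2.2, (hbd i).2.1])
  rw [Fintype.sum_bool, smul_add, ← add_assoc] at e1
  rw [Fintype.sum_bool, smul_add, ← sub_sub] at e2
  have e1' : ‖(y 0 + h • ∑ i, tw i • (D *ᵥ g (Y i))
            + h • ∑ i, w i • (ε⁻¹ • r (Y i))) - y h‖ ≤ C * h ^ 4 := e1
  have e2' : ‖(pt 0 - h • ∑ i, tw i • (((jacMat g (Y i))ᵀ * Dbar) *ᵥ tP i)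
               - h • ∑ i, w i • (ε⁻¹ • ((jacMat r (Y i))ᵀ *ᵥ P i))) - pt h‖ ≤ C * h ^ 4 := e2
  linarith
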